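/- arXiv:q-alg/9710004 — 4 statements merged into one kernel-verified Lean document; each statement's English description precedes it below -/
import Mathlib

section
/- When the leftmost factor is a singleton partition, associativity of the partition product holds on the nose: for every positive integer i and all ordered partitions π₂, π₃, the two finite sets ⋃_{τ ∈ (i)∗π₂} τ∗π₃ and ⋃_{σ ∈ π₂∗π₃} (i)∗σ are equal. -/
/-!
An element of either side arises by choosing an entry `j` of `π₂`, replacing it by `π₃`, and adding
nonnegative increments. On the left, `j` receives an increment `c` and `j + c - 1` is then
distributed over `π₃`; on the right, `j - 1` is distributed over `π₃` first, and the block then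
receives further increments of total `c`. The two descriptions agree because vectors of increments
add termwise (`zipWith_add_assoc`) and, conversely, a vector with sum `(j - 1) + c` splits as a sum
of vectors with sums `j - 1` and `c` (`exists_zipWith_add_of_sum_eq`); positivity of `j` is used in
this last direction.
-/


/-- The product of a singleton partition `(i)` with an ordered partition `π' = (j₁|⋯|j_s)`. -/
def OMul (i : ℕ) (π' : List ℕ) : Set (List ℕ) :=
  { τ | ∃ u : List ℕ, u.length = π'.length ∧ u.sum + 1 = i ∧ τ = List.zipWith (· + ·) π' u }

/-- The product `π ∗ π'` of two ordered partitions. -/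
def PMul (π π' : List ℕ) : Set (List ℕ) :=
  { ρ | ∃ (a b : List ℕ) (i : ℕ), π = a ++ i :: b ∧ ∃ τ ∈ OMul i π', ρ = a ++ τ ++ b }

/-- An ordered partition: a nonempty finite list of positive integers. -/
def IsOP (π : List ℕ) : Prop := π ≠ [] ∧ ∀ x ∈ π, 0 < x

theorem PMul_singleton (i : ℕ) (π : List ℕ) : PMul [i] π = OMul i π := by
  ext ρ
  constructor
  · rintro ⟨a, b, k, h, τ, hτ, rfl⟩
    have ha : a = [] := by
      have := congrArg List.length h
      simp only [List.length_append, List.length_cons, List.length_nil] at this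
      exact List.eq_nil_of_length_eq_zero (by omega)
    subst ha
    simp only [List.nil_append, List.cons.injEq] at h
    obtain ⟨rfl, rfl⟩ := h
    simpa using hτ
  · intro h
    exact ⟨[], [], i, rfl, ρ, h, by simp⟩

theorem zipWith_add_assoc (a b c : List ℕ) :
    List.zipWith (· + ·) (List.zipWith (· + ·) a b) c
      = List.zipWith (· + ·) a (List.zipWith (· + ·) b c) := by
  induction a generalizing b c with
  | nil => simp
  | cons x a ih => cases b <;> cases c <;> simp_all [add_assoc]

theorem sum_zipWith_add (a b : List ℕ) (h : a.length = b.length) :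
    (List.zipWith (· + ·) a b).sum = a.sum + b.sum := by
  induction a generalizing b with
  | nil => cases b <;> simp_all
  | cons x a ih =>
    cases b with
    | nil => simp at h
    | cons y b =>
      have := ih b (by simpa using h)
      simp only [List.zipWith_cons_cons, List.sum_cons, this]
      omega

theorem exists_zipWith_add_of_sum_eq (v : List ℕ) (m n : ℕ) (h : v.sum = m + n) :
    ∃ v₁ v₂ : List ℕ, v₁.length = v.length ∧ v₂.length = v.length ∧
      v₁.sum = m ∧ v₂.sum = n ∧ v = List.zipWith (· + ·) v₁ v₂ := by
  induction v generalizing m n with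
  | nil =>
    simp only [List.sum_nil] at h
    exact ⟨[], [], rfl, rfl, by simp; omega, by simp; omega, rfl⟩
  | cons x v ih =>
    simp only [List.sum_cons] at h
    -- Fill the first summand greedily: it takes as much of `x` as `m` allows.
    obtain ⟨v₁, v₂, h₁, h₂, s₁, s₂, e⟩ := ih (m - min x m) (n - (x - min x m)) (by omega)
    refine ⟨min x m :: v₁, (x - min x m) :: v₂, by simp [h₁], by simp [h₂], ?_, ?_, ?_⟩
    · simp only [List.sum_cons, s₁]; omega
    · simp only [List.sum_cons, s₂]; omega
    · simp only [List.zipWith_cons_cons, ← e, List.cons.injEq, and_true]; omega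

/-- When the leftmost factor is a singleton, the partition product is associative on the
nose: `⋃_{τ ∈ (i)∗π₂} τ∗π₃ = ⋃_{σ ∈ π₂∗π₃} (i)∗σ` as sets of ordered partitions. -/
theorem singleton_assoc (i : ℕ) (hi : 1 ≤ i) (π₂ π₃ : List ℕ)
    (h₂ : IsOP π₂) (h₃ : IsOP π₃) :
    { ρ : List ℕ | ∃ τ ∈ PMul [i] π₂, ρ ∈ PMul τ π₃ }
      = { ρ : List ℕ | ∃ σ ∈ PMul π₂ π₃, ρ ∈ PMul [i] σ } := by
  simp only [PMul_singleton]
  ext ρ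
  constructor
  · rintro ⟨τ, ⟨u, hul, hus, rfl⟩, a, b, k, hk, _, ⟨v, hvl, hvs, rfl⟩, rfl⟩
    obtain ⟨a₂, r, ua, s, hl, rfl, rfl, rfl, hkb⟩ := List.zipWith_eq_append_iff.1 hk
    obtain ⟨j, b₂, c, ub, rfl, rfl, rfl, rfl⟩ := List.zipWith_eq_cons_iff.1 hkb.symm
    have hj : 0 < j := h₂.2 j (by simp)
    obtain ⟨v₁, v₂, l₁, l₂, s₁, s₂, rfl⟩ :=
      exists_zipWith_add_of_sum_eq v (j - 1) c (by omega)
    simp only [List.length_append, List.length_cons] at hul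
    simp only [List.sum_append, List.sum_cons] at hus
    refine ⟨a₂ ++ List.zipWith (· + ·) π₃ v₁ ++ b₂,
      ⟨a₂, b₂, j, rfl, _, ⟨v₁, by omega, by omega, rfl⟩, rfl⟩,
      ua ++ v₂ ++ ub, ?_, ?_, ?_⟩
    · simp only [List.length_append, List.length_zipWith] at *; omega
    · simp only [List.sum_append]; omega
    · rw [List.zipWith_append (by simp only [List.length_append, List.length_zipWith] at *; omega),
        List.zipWith_append hl, zipWith_add_assoc]
  · rintro ⟨_, ⟨a, b, j, rfl, _, ⟨v, hvl, hvs, rfl⟩, rfl⟩, w, hwl, hws, rfl⟩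
    simp only [List.length_append, List.length_zipWith] at hwl
    obtain ⟨wa, wv, wb, rfl, la, lv⟩ : ∃ wa wv wb : List ℕ, w = wa ++ wv ++ wb ∧
        wa.length = a.length ∧ wv.length = v.length := by
      refine ⟨w.take a.length, (w.drop a.length).take v.length,
        (w.drop a.length).drop v.length, ?_, ?_, ?_⟩
      · rw [List.append_assoc, List.take_append_drop, List.take_append_drop]
      · simp only [List.length_take]; omega
      · simp only [List.length_take, List.length_drop]; omega
    simp only [List.length_append] at hwl
    simp only [List.sum_append] at hws
    refine ⟨List.zipWith (· + ·) (a ++ j :: b) (wa ++ wv.sum :: wb),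
      ⟨_, by simp only [List.length_append, List.length_cons]; omega,
        by simp only [List.sum_append, List.sum_cons]; omega, rfl⟩,
      List.zipWith (· + ·) a wa, List.zipWith (· + ·) b wb, j + wv.sum, ?_,
      List.zipWith (· + ·) π₃ (List.zipWith (· + ·) v wv),
      ⟨_, by simp only [List.length_zipWith]; omega,
        by rw [sum_zipWith_add _ _ lv.symm]; omega, rfl⟩, ?_⟩
    · rw [List.zipWith_append la.symm, List.zipWith_cons_cons]
    · rw [List.zipWith_append (by simp only [List.length_append, List.length_zipWith]; omega),
        List.zipWith_append la.symm, zipWith_add_assoc]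
end

section
/- The extended algebra of partitions with zero entries is not right pre-Lie: for all integers i ≥ 2 and j ≥ 1, one has ⟨T((i),(0),(j))⟩ − ⟨U((i),(0),(j))⟩ = (i+j−2) (a single basis element), whereas ⟨T((i),(j),(0))⟩ − ⟨U((i),(j),(0))⟩ = 0; in particular the right pre-Lie identity ⟨T(π₁,π₂,π₃)⟩ − ⟨U(π₁,π₂,π₃)⟩ = ⟨T(π₁,π₃,π₂)⟩ − ⟨U(π₁,π₃,π₂)⟩ fails for (π₁,π₂,π₃) = ((i),(0),(j)). -/
/-- `T(π₁,π₂,π₃) = ⋃_{τ ∈ π₁∗π₂} τ∗π₃`. -/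
def Tset (π₁ π₂ π₃ : List ℕ) : Set (List ℕ) := { ρ | ∃ τ ∈ PMul π₁ π₂, ρ ∈ PMul τ π₃ }

/-- `U(π₁,π₂,π₃) = ⋃_{σ ∈ π₂∗π₃} π₁∗σ`. -/
def Uset (π₁ π₂ π₃ : List ℕ) : Set (List ℕ) := { ρ | ∃ σ ∈ PMul π₂ π₃, ρ ∈ PMul π₁ σ }

/-- The product of two singletons; the condition `1 ≤ i` encodes `(0)∗(j) = ∅` and makes the
truncated subtraction `i - 1` genuine. -/
lemma mem_PMul_singleton (i j : ℕ) (ρ : List ℕ) :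
    ρ ∈ PMul [i] [j] ↔ 1 ≤ i ∧ ρ = [j + (i - 1)] := by
  constructor
  · rintro ⟨a, b, k, h, τ, ⟨u, hu, hs, rfl⟩, rfl⟩
    obtain ⟨v, rfl⟩ := List.length_eq_one_iff.mp hu
    cases a with
    | nil =>
      obtain ⟨rfl, rfl⟩ : i = k ∧ [] = b := by simpa using h
      simp at hs ⊢
      omega
    | cons x a => simp at h
  · rintro ⟨hi, rfl⟩
    exact ⟨[], [], i, rfl, [j + (i - 1)], ⟨[i - 1], rfl, by simp; omega, rfl⟩, rfl⟩

/-- The extended algebra of partitions involving zeros is not right pre-Lie: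
`⟨T((i),(0),(j))⟩ − ⟨U((i),(0),(j))⟩` is the single basis element `(i+j−2)`, while
`⟨T((i),(j),(0))⟩ − ⟨U((i),(j),(0))⟩ = 0`; in particular the right pre-Lie identity fails
for `(π₁,π₂,π₃) = ((i),(0),(j))`. -/
theorem extended_not_preLie (i j : ℕ) (hi : 2 ≤ i) (hj : 1 ≤ j) :
    (∀ ρ : List ℕ,
      Set.indicator (Tset [i] [0] [j]) (fun _ => (1 : ℤ)) ρ
        - Set.indicator (Uset [i] [0] [j]) (fun _ => (1 : ℤ)) ρ
      = if ρ = [i + j - 2] then 1 else 0)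
    ∧ (∀ ρ : List ℕ,
      Set.indicator (Tset [i] [j] [0]) (fun _ => (1 : ℤ)) ρ
        - Set.indicator (Uset [i] [j] [0]) (fun _ => (1 : ℤ)) ρ = 0)
    ∧ ¬ (∀ ρ : List ℕ,
      Set.indicator (Tset [i] [0] [j]) (fun _ => (1 : ℤ)) ρ
        - Set.indicator (Uset [i] [0] [j]) (fun _ => (1 : ℤ)) ρ
      = Set.indicator (Tset [i] [j] [0]) (fun _ => (1 : ℤ)) ρ
        - Set.indicator (Uset [i] [j] [0]) (fun _ => (1 : ℤ)) ρ) := by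
  have hT0 : Tset [i] [0] [j] = {[i + j - 2]} := by
    ext ρ
    simp only [Tset, Set.mem_ofPred_eq, mem_PMul_singleton, Set.mem_singleton_iff]
    constructor
    · rintro ⟨τ, ⟨-, rfl⟩, h⟩
      obtain ⟨-, rfl⟩ := (mem_PMul_singleton _ _ _).mp h
      congr 1; omega
    · rintro rfl
      refine ⟨_, ⟨by omega, rfl⟩, (mem_PMul_singleton _ _ _).mpr ⟨by omega, ?_⟩⟩
      congr 1; omega
  have hU0 : Uset [i] [0] [j] = ∅ := by
    ext ρ
    simp [Uset, mem_PMul_singleton]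
  have hTj : Tset [i] [j] [0] = {[i + j - 2]} := by
    ext ρ
    simp only [Tset, Set.mem_ofPred_eq, mem_PMul_singleton, Set.mem_singleton_iff]
    constructor
    · rintro ⟨τ, ⟨-, rfl⟩, h⟩
      obtain ⟨-, rfl⟩ := (mem_PMul_singleton _ _ _).mp h
      congr 1; omega
    · rintro rfl
      refine ⟨_, ⟨by omega, rfl⟩, (mem_PMul_singleton _ _ _).mpr ⟨by omega, ?_⟩⟩
      congr 1; omega
  have hUj : Uset [i] [j] [0] = {[i + j - 2]} := by
    ext ρ
    simp only [Uset, Set.mem_ofPred_eq, mem_PMul_singleton, Set.mem_singleton_iff]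
    constructor
    · rintro ⟨σ, ⟨-, rfl⟩, h⟩
      obtain ⟨-, rfl⟩ := (mem_PMul_singleton _ _ _).mp h
      congr 1; omega
    · rintro rfl
      refine ⟨_, ⟨by omega, rfl⟩, (mem_PMul_singleton _ _ _).mpr ⟨by omega, ?_⟩⟩
      congr 1; omega
  rw [hT0, hU0, hTj, hUj]
  refine ⟨fun ρ => ?_, fun ρ => sub_self _, fun h => ?_⟩
  · simp [Set.indicator_apply]
  · simpa using h [i + j - 2]
end

section
/- Gerstenhaber's theorem: the composition product on the truncated Hochschild complex is bigraded right pre-Lie; that is, for homogeneous multilinear maps x, y, z on A of arities ≥ 1, (x∘y)∘z − x∘(y∘z) = (−1)^{d(y)d(z) + |y||z|} ((x∘z)∘y − x∘(z∘y)), where d(x) = (arity of x) − 1. -/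
/-!
Expanding `(x∘y)∘z` gives a double sum over the slot `i` at which `z` is inserted into the
arguments and the slot `k` at which `y` is then inserted. The terms in which `z` is fed into `y`
(`k ≤ i < k + n`) add up to `x∘(y∘z)` by linearity of `x` in slot `k` (`gcomp_nested`), with
matching signs. Hence the associator is the sum of the terms in which `y` and `z` occupy two
different slots of `x`: `z` to the left of `y`, or `z` to the right of `y` (`assoc_eq`).
Inserting at two different slots commutes up to the sign `(-1)^{d(y)d(z)+|y||z|}`
(`nestedTerm_swap`), so exchanging `y` and `z` exchanges the two halves up to that sign.

Arities of `y` and `z` are written `n + 1` and `p + 1` in the lemmas, so that `n = d(y)` and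
`p = d(z)` and no truncated subtraction occurs.
-/

/-- Insert the value `v` (of a composed `n`-linear map) at slot `i` of the argument
sequence `a`, shifting the remaining arguments. -/
def insArg {V : Type*} (i n : ℕ) (v : V) (a : ℕ → V) : ℕ → V :=
  fun j => if j < i then a j else if j = i then v else a (j + n - 1)

/-- The corresponding insertion on parity sequences: the inserted slot receives the parity
`q + p i + ⋯ + p (i+n−1)` of `y(aᵢ,…,a_{i+n−1})`, where `q` is the parity of `y`. -/
def insPar (i n : ℕ) (q : ZMod 2) (p : ℕ → ZMod 2) : ℕ → ZMod 2 :=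
  fun j => if j < i then p j
    else if j = i then q + ∑ k ∈ Finset.range n, p (i + k)
    else p (j + n - 1)

/-- Gerstenhaber composition `x∘y` of an `m`-linear map `x` with an `n`-linear map `y` of
parity `qy`, evaluated on homogeneous arguments `a` with parities `p`:
`(x∘y)(a₁,…,a_{m+n−1}) = Σᵢ (−1)^{(n−1)(i−1)+|y|(|a₁|+⋯+|a_{i−1}|)}
x(a₁,…,a_{i−1}, y(aᵢ,…,a_{i+n−1}), a_{i+n},…)`. -/
def gcomp {V : Type*} [AddCommGroup V] (m n : ℕ) (qy : ZMod 2)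
    (x y : (ℕ → ZMod 2) → (ℕ → V) → V) : (ℕ → ZMod 2) → (ℕ → V) → V :=
  fun p a => ∑ i ∈ Finset.range m,
    ((-1 : ℤ) ^ ((n - 1) * i + qy.val * ∑ j ∈ Finset.range i, (p j).val)) •
      x (insPar i n qy p) (insArg i n (y (fun k => p (i + k)) (fun k => a (i + k))) a)

/-- `x` is a homogeneous multilinear map of arity `m` and parity `q` with respect to the
ℤ/2-grading `𝒜` induced by the ℤ-grading of the underlying space: it is additive and
homogeneous in each of its `m` slots, depends only on those slots, and sends homogeneous
arguments to a homogeneous value of parity `q + |a₁| + ⋯ + |aₘ|`. -/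
def IsHomogMultilinear {K V : Type*} [Field K] [AddCommGroup V] [Module K V]
    (𝒜 : ZMod 2 → Submodule K V) (m : ℕ) (q : ZMod 2)
    (x : (ℕ → ZMod 2) → (ℕ → V) → V) : Prop :=
  (∀ (p : ℕ → ZMod 2) (a : ℕ → V) (i : ℕ), i < m → ∀ u v : V,
      x p (Function.update a i (u + v))
        = x p (Function.update a i u) + x p (Function.update a i v))
  ∧ (∀ (p : ℕ → ZMod 2) (a : ℕ → V) (i : ℕ), i < m → ∀ (c : K) (u : V),
      x p (Function.update a i (c • u)) = c • x p (Function.update a i u))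
  ∧ (∀ (p p' : ℕ → ZMod 2) (a a' : ℕ → V),
      (∀ j < m, p j = p' j) → (∀ j < m, a j = a' j) → x p a = x p' a')
  ∧ (∀ (p : ℕ → ZMod 2) (a : ℕ → V), (∀ j < m, a j ∈ 𝒜 (p j)) →
      x p a ∈ 𝒜 (q + ∑ j ∈ Finset.range m, p j))

/-- The signed term of `(x∘y)∘z` in which `z` is inserted at slot `i` of the arguments and then
`y` at slot `k` of the resulting sequence. -/
def nestedTerm {V : Type*} [AddCommGroup V] (n p : ℕ) (qy qz : ZMod 2)
    (x y z : (ℕ → ZMod 2) → (ℕ → V) → V) (pa : ℕ → ZMod 2) (a : ℕ → V) (i k : ℕ) : V :=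
  ((-1 : ℤ) ^ (((p - 1) * i + qz.val * ∑ j ∈ Finset.range i, (pa j).val) +
    ((n - 1) * k + qy.val * ∑ j ∈ Finset.range k, (insPar i p qz pa j).val))) •
    x (insPar k n qy (insPar i p qz pa))
      (insArg k n
        (y (fun l => insPar i p qz pa (k + l))
          (fun l => insArg i p (z (fun l => pa (i + l)) (fun l => a (i + l))) a (k + l)))
        (insArg i p (z (fun l => pa (i + l)) (fun l => a (i + l))) a))

lemma gcomp_gcomp_eq_sum {V : Type*} [AddCommGroup V] (M m n p : ℕ) (qy qz : ZMod 2)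
    (x y z : (ℕ → ZMod 2) → (ℕ → V) → V) (pa : ℕ → ZMod 2) (a : ℕ → V) :
    gcomp M p qz (gcomp m n qy x y) z pa a =
      ∑ k ∈ Finset.range m, ∑ i ∈ Finset.range M, nestedTerm n p qy qz x y z pa a i k := by
  simp only [gcomp, Finset.smul_sum, smul_smul, ← pow_add]
  rw [Finset.sum_comm]
  rfl

/-- Signs are compared through the parity of their exponents. -/
lemma neg_one_pow_eq_of_cast_eq {a b : ℕ} (h : (a : ZMod 2) = b) : (-1 : ℤ) ^ a = (-1) ^ b := by
  rw [neg_one_pow_eq_pow_mod_two, neg_one_pow_eq_pow_mod_two (n := b),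
    (ZMod.natCast_eq_natCast_iff' a b 2).mp h]

lemma sum_insPar_of_le (i n k : ℕ) (q : ZMod 2) (p : ℕ → ZMod 2) (h : k ≤ i) :
    ∑ j ∈ Finset.range k, insPar i n q p j = ∑ j ∈ Finset.range k, p j := by
  refine Finset.sum_congr rfl fun j hj => ?_
  rw [Finset.mem_range] at hj
  rw [insPar, if_pos (by omega)]

/-- Beyond the insertion slot, a partial sum of the new parities is the partial sum of the old
ones plus the parity of the inserted map. -/
lemma sum_insPar_of_lt (k n t : ℕ) (q : ZMod 2) (p : ℕ → ZMod 2) :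
    ∑ j ∈ Finset.range (k + 1 + t), insPar k (n + 1) q p j =
      q + ∑ j ∈ Finset.range (k + 1 + t + n), p j := by
  induction t with
  | zero =>
    rw [add_zero, Finset.sum_range_succ, sum_insPar_of_le _ _ _ _ _ le_rfl,
      show k + 1 + n = k + (n + 1) by omega, Finset.sum_range_add]
    simp [insPar]
    ring
  | succ t ih =>
    rw [← add_assoc, Finset.sum_range_succ, ih,
      show k + 1 + t + 1 + n = (k + 1 + t + n) + 1 by omega,
      Finset.sum_range_succ, add_assoc]
    congr 2
    rw [insPar, if_neg (by omega), if_neg (by omega)]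
    congr 1

/-- A sum over the `m + n` slots of `x∘y` splits into the slots to the left of `y`, the `n + 1`
slots of `y`, and the slots to the right of `y`, when `y` sits at slot `k` of `x`. -/
lemma sum_range_split {V : Type*} [AddCommGroup V] (m n k : ℕ) (hk : k < m) (f : ℕ → V) :
    ∑ i ∈ Finset.range (m + n), f i =
      ∑ i ∈ Finset.range m, (if i < k then f i else 0)
      + ∑ l ∈ Finset.range (n + 1), f (k + l)
      + ∑ i ∈ Finset.range m, (if k < i then f (i + n) else 0) := by
  obtain ⟨t, rfl⟩ : ∃ t, m = k + 1 + t := ⟨m - k - 1, by omega⟩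
  have h1 : ∑ i ∈ Finset.range (k + 1 + t), (if i < k then f i else 0)
      = ∑ i ∈ Finset.range k, f i := by
    rw [show k + 1 + t = k + (1 + t) by omega, Finset.sum_range_add]
    rw [Finset.sum_congr rfl (fun i hi => if_pos (Finset.mem_range.mp hi))]
    simp
  have h2 : ∑ i ∈ Finset.range (k + 1 + t), (if k < i then f (i + n) else 0)
      = ∑ j ∈ Finset.range t, f (k + (n + 1) + j) := by
    rw [Finset.sum_range_add, Finset.sum_eq_zero, zero_add]
    · refine Finset.sum_congr rfl fun j _ => ?_
      rw [if_pos (by omega)]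
      congr 1
      omega
    · intro i hi
      rw [Finset.mem_range] at hi
      rw [if_neg (by omega)]
  rw [h1, h2, show k + 1 + t + n = k + (n + 1) + t by omega, Finset.sum_range_add,
    Finset.sum_range_add]

lemma insPar_shift (k l p : ℕ) (q : ZMod 2) (pa : ℕ → ZMod 2) :
    (fun j => insPar (k + l) (p + 1) q pa (k + j))
      = insPar l (p + 1) q (fun j => pa (k + j)) := by
  funext j
  simp only [insPar, add_assoc, add_lt_add_iff_left, add_right_inj]
  split_ifs <;> rfl

lemma insPar_insPar_inner (k n l p : ℕ) (hl : l < n + 1) (qy qz : ZMod 2) (pa : ℕ → ZMod 2) :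
    insPar k (n + 1) qy (insPar (k + l) (p + 1) qz pa)
      = insPar k (n + p + 1) (qy + qz) pa := by
  funext j
  rcases lt_trichotomy j k with h | rfl | h
  · simp [insPar, h, show j < k + l by omega]
  · obtain ⟨t, rfl⟩ : ∃ t, n = l + t := ⟨n - l, by omega⟩
    have e1 := sum_insPar_of_lt l p t qz (fun i => pa (j + i))
    have e2 : ∀ i, insPar (j + l) (p + 1) qz pa (j + i)
        = insPar l (p + 1) qz (fun i => pa (j + i)) i :=
      congrFun (insPar_shift j l p qz pa)
    simp only [e2, insPar.eq_1 j, lt_irrefl, if_false, if_true]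
    rw [show l + t + 1 = l + 1 + t by omega, e1, show l + t + p + 1 = l + 1 + t + p by omega]
    ring
  · simp only [insPar]
    rw [if_neg (by omega), if_neg (by omega), if_neg (by omega), if_neg (by omega),
      if_neg (by omega), if_neg (by omega)]
    congr 1
    omega

lemma insArg_insArg_inner {V : Type*} (k n l p : ℕ) (hl : l < n + 1) (u v : V) (a : ℕ → V) :
    insArg k (n + 1) u (insArg (k + l) (p + 1) v a) = insArg k (n + p + 1) u a := by
  funext j
  simp only [insArg]
  rcases lt_trichotomy j k with h | rfl | h
  · simp [h, show j < k + l by omega]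
  · simp
  · rw [if_neg (by omega), if_neg (by omega), if_neg (by omega), if_neg (by omega),
      if_neg (by omega), if_neg (by omega)]
    congr 1
    omega

lemma insArg_eq_update {V : Type*} (i n : ℕ) (v : V) (a : ℕ → V) :
    insArg i n v a = Function.update (insArg i n (a 0) a) i v := by
  funext j
  by_cases h : j = i
  · subst h; simp [insArg]
  · simp [insArg, h]

lemma insArg_shift {V : Type*} (k l p : ℕ) (v : V) (a : ℕ → V) :
    (fun j => insArg (k + l) (p + 1) v a (k + j))
      = insArg l (p + 1) v (fun j => a (k + j)) := by
  funext j
  simp only [insArg, add_lt_add_iff_left, add_right_inj]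
  split_ifs <;> first | rfl | (congr 1; omega)

lemma IsHomogMultilinear.insArg_sum {K V : Type*} [Field K] [AddCommGroup V] [Module K V]
    {𝒜 : ZMod 2 → Submodule K V} {m : ℕ} {q : ZMod 2} {x : (ℕ → ZMod 2) → (ℕ → V) → V}
    (hx : IsHomogMultilinear 𝒜 m q x) (i n : ℕ) (hi : i < m) (p : ℕ → ZMod 2) (a : ℕ → V)
    (N : ℕ) (c : ℕ → ℤ) (v : ℕ → V) :
    x p (insArg i n (∑ l ∈ Finset.range N, c l • v l) a)
      = ∑ l ∈ Finset.range N, c l • x p (insArg i n (v l) a) := by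
  let φ : V →ₗ[K] V :=
    { toFun := fun u => x p (insArg i n u a)
      map_add' := fun u v => by
        rw [insArg_eq_update i n (u + v), insArg_eq_update i n u, insArg_eq_update i n v]
        exact hx.1 _ _ i hi u v
      map_smul' := fun c u => by
        rw [insArg_eq_update i n (c • u), insArg_eq_update i n u]
        exact hx.2.1 _ _ i hi c u }
  change φ _ = ∑ l ∈ Finset.range N, c l • φ (v l)
  simp

/-- The terms of `(x∘y)∘z` in which `z` is fed into `y` add up to `x∘(y∘z)`. -/
lemma gcomp_nested {K V : Type*} [Field K] [AddCommGroup V] [Module K V]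
    {𝒜 : ZMod 2 → Submodule K V} {m : ℕ} (n p : ℕ) {qx : ZMod 2} (qy qz : ZMod 2)
    {x : (ℕ → ZMod 2) → (ℕ → V) → V} (y z : (ℕ → ZMod 2) → (ℕ → V) → V)
    (hx : IsHomogMultilinear 𝒜 m qx x) (pa : ℕ → ZMod 2) (a : ℕ → V) :
    gcomp m (n + p + 1) (qy + qz) x (gcomp (n + 1) (p + 1) qz y z) pa a =
      ∑ k ∈ Finset.range m, ∑ l ∈ Finset.range (n + 1),
        nestedTerm (n + 1) (p + 1) qy qz x y z pa a (k + l) k := by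
  rw [gcomp]
  refine Finset.sum_congr rfl fun k hk => ?_
  rw [Finset.mem_range] at hk
  rw [gcomp, hx.insArg_sum _ _ hk, Finset.smul_sum]
  refine Finset.sum_congr rfl fun l hl => ?_
  rw [Finset.mem_range] at hl
  rw [nestedTerm, insPar_insPar_inner _ _ _ _ hl, insArg_insArg_inner _ _ _ _ hl, insArg_shift,
    insPar_shift, smul_smul, ← pow_add]
  simp only [← add_assoc]
  congr 1
  apply neg_one_pow_eq_of_cast_eq
  have h := sum_insPar_of_le (k + l) (p + 1) k qz pa (by omega)
  push_cast
  simp only [ZMod.natCast_zmod_val, h, Finset.sum_range_add]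
  ring

/-- Inserting `y` at slot `k` and `z` at a slot `i > k` of `x` in either order gives the same
term up to the sign `(-1)^{d(y)d(z)+|y||z|}`. If `z` is inserted first, its slot is `i + d(y)`. -/
lemma nestedTerm_swap {K V : Type*} [Field K] [AddCommGroup V] [Module K V]
    {𝒜 : ZMod 2 → Submodule K V} (n p : ℕ) {qy : ZMod 2} (qz : ZMod 2)
    (x : (ℕ → ZMod 2) → (ℕ → V) → V) {y : (ℕ → ZMod 2) → (ℕ → V) → V}
    (z : (ℕ → ZMod 2) → (ℕ → V) → V)
    (hy : IsHomogMultilinear 𝒜 (n + 1) qy y) (pa : ℕ → ZMod 2) (a : ℕ → V)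
    (i k : ℕ) (hki : k < i) :
    nestedTerm (n + 1) (p + 1) qy qz x y z pa a (i + n) k =
      ((-1 : ℤ) ^ (n * p + qy.val * qz.val)) •
        nestedTerm (p + 1) (n + 1) qz qy x z y pa a k i := by
  have hyy : ∀ v : V, y (fun l => insPar (i + n) (p + 1) qz pa (k + l))
      (fun l => insArg (i + n) (p + 1) v a (k + l))
      = y (fun l => pa (k + l)) (fun l => a (k + l)) := by
    intro v
    apply hy.2.2.1
    · intro j hj
      rw [insPar, if_pos (by omega)]
    · intro j hj
      rw [insArg, if_pos (by omega)]
  have hz1 : (fun l => insPar k (n + 1) qy pa (i + l)) = fun l => pa (i + n + l) := by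
    funext l
    rw [insPar, if_neg (by omega), if_neg (by omega)]
    congr 1
    omega
  have hz2 : ∀ v : V, (fun l => insArg k (n + 1) v a (i + l)) = fun l => a (i + n + l) := by
    intro v
    funext l
    rw [insArg, if_neg (by omega), if_neg (by omega)]
    congr 1
    omega
  have hP : insPar k (n + 1) qy (insPar (i + n) (p + 1) qz pa)
      = insPar i (p + 1) qz (insPar k (n + 1) qy pa) := by
    funext j
    have h1 : ∑ l ∈ Finset.range (n + 1), insPar (i + n) (p + 1) qz pa (k + l)
        = ∑ l ∈ Finset.range (n + 1), pa (k + l) := by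
      refine Finset.sum_congr rfl fun l hl => ?_
      rw [Finset.mem_range] at hl
      rw [insPar, if_pos (by omega)]
    have h2 : ∑ l ∈ Finset.range (p + 1), insPar k (n + 1) qy pa (i + l)
        = ∑ l ∈ Finset.range (p + 1), pa (i + n + l) :=
      Finset.sum_congr rfl fun l _ => congrFun hz1 l
    rw [insPar.eq_1 k, insPar.eq_1 i, h1, h2]
    simp only [insPar]
    split_ifs <;> first | rfl | omega | (congr 1; omega)
  have hA : ∀ u v : V, insArg k (n + 1) u (insArg (i + n) (p + 1) v a)
      = insArg i (p + 1) v (insArg k (n + 1) u a) := by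
    intro u v
    funext j
    simp only [insArg]
    split_ifs <;> first | rfl | omega | (congr 1; omega)
  rw [nestedTerm, nestedTerm, hyy, hz1, hz2, hP, hA, smul_smul, ← pow_add]
  congr 1
  apply neg_one_pow_eq_of_cast_eq
  obtain ⟨t, rfl⟩ : ∃ t, i = k + 1 + t := ⟨i - k - 1, by omega⟩
  have h1 := sum_insPar_of_le (k + 1 + t + n) (p + 1) k qz pa (by omega)
  have h2 := sum_insPar_of_lt k n t qy pa
  push_cast
  simp only [ZMod.natCast_zmod_val, h1, h2]
  -- In characteristic two, the two contributions `|y||z|` on the right cancel.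
  have h3 : (2 : ZMod 2) = 0 := rfl
  linear_combination (-(qy * qz)) * h3

/-- The associator of `x, y, z` is the sum of the terms in which `y` and `z` occupy different
slots of `x`. -/
lemma assoc_eq {K V : Type*} [Field K] [AddCommGroup V] [Module K V]
    {𝒜 : ZMod 2 → Submodule K V} {m : ℕ} (n p : ℕ) {qx : ZMod 2} (qy qz : ZMod 2)
    {x : (ℕ → ZMod 2) → (ℕ → V) → V} (y z : (ℕ → ZMod 2) → (ℕ → V) → V)
    (hx : IsHomogMultilinear 𝒜 m qx x) (pa : ℕ → ZMod 2) (a : ℕ → V) :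
    gcomp (m + n) (p + 1) qz (gcomp m (n + 1) qy x y) z pa a
        - gcomp m (n + p + 1) (qy + qz) x (gcomp (n + 1) (p + 1) qz y z) pa a =
      ∑ k ∈ Finset.range m, ∑ i ∈ Finset.range m,
        (if i < k then nestedTerm (n + 1) (p + 1) qy qz x y z pa a i k else 0)
      + ∑ k ∈ Finset.range m, ∑ i ∈ Finset.range m,
        (if k < i then nestedTerm (n + 1) (p + 1) qy qz x y z pa a (i + n) k else 0) := by
  rw [gcomp_gcomp_eq_sum, gcomp_nested n p qy qz y z hx, ← Finset.sum_sub_distrib,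
    ← Finset.sum_add_distrib]
  refine Finset.sum_congr rfl fun k hk => ?_
  rw [sum_range_split m n k (Finset.mem_range.mp hk)]
  abel

/-- The terms with `z` to the right of `y` are, up to sign, the terms with `y` to the left of `z`
in the associator of `x, z, y`. -/
lemma sum_nestedTerm_swap {K V : Type*} [Field K] [AddCommGroup V] [Module K V]
    {𝒜 : ZMod 2 → Submodule K V} (m n p : ℕ) {qy : ZMod 2} (qz : ZMod 2)
    (x : (ℕ → ZMod 2) → (ℕ → V) → V) {y : (ℕ → ZMod 2) → (ℕ → V) → V}
    (z : (ℕ → ZMod 2) → (ℕ → V) → V)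
    (hy : IsHomogMultilinear 𝒜 (n + 1) qy y) (pa : ℕ → ZMod 2) (a : ℕ → V) :
    ∑ k ∈ Finset.range m, ∑ i ∈ Finset.range m,
        (if k < i then nestedTerm (n + 1) (p + 1) qy qz x y z pa a (i + n) k else 0) =
      ((-1 : ℤ) ^ (n * p + qy.val * qz.val)) •
        ∑ k ∈ Finset.range m, ∑ i ∈ Finset.range m,
          (if i < k then nestedTerm (p + 1) (n + 1) qz qy x z y pa a i k else 0) := by
  rw [Finset.sum_comm]
  simp only [Finset.smul_sum, smul_ite, smul_zero]
  refine Finset.sum_congr rfl fun i _ => Finset.sum_congr rfl fun k _ => ?_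
  split_ifs with h
  · exact nestedTerm_swap n p qz x z hy pa a i k h
  · rfl

/-- Gerstenhaber's theorem: the composition product on the truncated Hochschild complex is
bigraded right pre-Lie; for homogeneous multilinear maps `x, y, z` of arities `m, n, p ≥ 1`
and parities `qx, qy, qz`, evaluated on homogeneous arguments,
`(x∘y)∘z − x∘(y∘z) = (−1)^{d(y)d(z)+|y||z|}((x∘z)∘y − x∘(z∘y))`. -/
theorem gerstenhaber_right_preLie {K V : Type*} [Field K] [AddCommGroup V] [Module K V]
    (𝒜 : ZMod 2 → Submodule K V) (m n p : ℕ) (hm : 1 ≤ m) (hn : 1 ≤ n) (hp : 1 ≤ p)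
    (qx qy qz : ZMod 2) (x y z : (ℕ → ZMod 2) → (ℕ → V) → V)
    (hx : IsHomogMultilinear 𝒜 m qx x) (hy : IsHomogMultilinear 𝒜 n qy y)
    (hz : IsHomogMultilinear 𝒜 p qz z) :
    ∀ (pa : ℕ → ZMod 2) (a : ℕ → V), (∀ j, a j ∈ 𝒜 (pa j)) →
      gcomp (m + n - 1) p qz (gcomp m n qy x y) z pa a
        - gcomp m (n + p - 1) (qy + qz) x (gcomp n p qz y z) pa a
      = ((-1 : ℤ) ^ ((n - 1) * (p - 1) + qy.val * qz.val)) •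
          (gcomp (m + p - 1) n qy (gcomp m p qz x z) y pa a
            - gcomp m (p + n - 1) (qz + qy) x (gcomp p n qy z y) pa a) := by
  intro pa a _
  obtain ⟨n, rfl⟩ : ∃ t, n = t + 1 := ⟨n - 1, by omega⟩
  obtain ⟨p, rfl⟩ : ∃ t, p = t + 1 := ⟨p - 1, by omega⟩
  have e1 := assoc_eq n p qy qz y z hx pa a
  have e2 := assoc_eq p n qz qy z y hx pa a
  have s1 := sum_nestedTerm_swap m n p qz x z hy pa a
  have s2 := sum_nestedTerm_swap m p n qy x y hz pa a
  rw [show m + (n + 1) - 1 = m + n by omega, show m + (p + 1) - 1 = m + p by omega,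
    show n + 1 + (p + 1) - 1 = n + p + 1 by omega, show p + 1 + (n + 1) - 1 = p + n + 1 by omega,
    Nat.add_sub_cancel, Nat.add_sub_cancel, e1, e2, s1, s2, smul_add, smul_smul,
    mul_comm p n, mul_comm qz.val, ← mul_pow, add_comm]
  simp
end

section
/- For odd linear operators T and U on a ℤ/2-graded algebra A, the third Φ-operator of [T,U] = TU + UT satisfies, on homogeneous a, b, c: Φ³_{TU+UT}(a,b,c) = [ T(Φ³_U(a,b,c)) + Φ³_U(Ta,b,c) + (−1)^{|a|} Φ³_U(a,Tb,c) + (−1)^{|a|+|b|} Φ³_U(a,b,Tc) ] + [ U(Φ³_T(a,b,c)) + Φ³_T(Ua,b,c) + (−1)^{|a|} Φ³_T(a,Ub,c) + (−1)^{|a|+|b|} Φ³_T(a,b,Uc) ] + [ Φ²_T(Φ²_U(a,b),c) + (−1)^{(1+|a|)|b|} Φ²_T(b, Φ²_U(a,c)) + (−1)^{|a|} Φ²_U(a, Φ²_T(b,c)) ] + [ Φ²_U(Φ²_T(a,b),c) + (−1)^{(1+|a|)|b|} Φ²_U(b, Φ²_T(a,c)) + (−1)^{|a|} Φ²_T(a,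 Φ²_U(b,c)) ], where for the even operator D = TU+UT one sets Φ²_D(a,b) = D(ab) − D(a)b − aD(b) and Φ³_D(a,b,c) = Φ²_D(a,bc) − Φ²_D(a,b)c − (−1)^{|a||b|} b Φ²_D(a,c). -/
/-- The second Φ-operator of a homogeneous linear operator `D` of parity `q` on a
ℤ/2-graded algebra, evaluated at a homogeneous element `a` of parity `pa` and any `b`:
`Φ²_D(a,b) = D(ab) − D(a)b − (−1)^{|D||a|} a D(b)`. -/
def Phi2 {K A : Type*} [Field K] [AddCommGroup A] [Module K A]
    (mul : A →ₗ[K] A →ₗ[K] A) (q : ZMod 2) (D : A →ₗ[K] A) (pa : ZMod 2) (a b : A) : A :=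
  D (mul a b) - mul (D a) b - ((-1 : ℤ) ^ (q.val * pa.val)) • mul a (D b)

/-- The third Φ-operator:
`Φ³_D(a,b,c) = Φ²_D(a,bc) − Φ²_D(a,b)c − (−1)^{|b|(|D|+|a|)} b Φ²_D(a,c)`,
for `a` of parity `pa` and `b` of parity `pb`. -/
def Phi3 {K A : Type*} [Field K] [AddCommGroup A] [Module K A]
    (mul : A →ₗ[K] A →ₗ[K] A) (q : ZMod 2) (D : A →ₗ[K] A) (pa pb : ZMod 2)
    (a b c : A) : A :=
  Phi2 mul q D pa a (mul b c) - mul (Phi2 mul q D pa a b) c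
    - ((-1 : ℤ) ^ (pb.val * (q.val + pa.val))) • mul b (Phi2 mul q D pa a c)

/-- For odd operators `T`, `U` on a ℤ/2-graded algebra, the third Φ-operator of the
bracket `[T,U] = TU + UT` expands on homogeneous `a`, `b`, `c` as stated. -/
theorem phi3_bracket {K A : Type*} [Field K] [CharZero K] [AddCommGroup A] [Module K A]
    (𝒜 : ZMod 2 → Submodule K A) (mul : A →ₗ[K] A →ₗ[K] A)
    (hmul : ∀ (i j : ZMod 2) (a b : A), a ∈ 𝒜 i → b ∈ 𝒜 j → mul a b ∈ 𝒜 (i + j))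
    (T U : A →ₗ[K] A)
    (hT : ∀ (i : ZMod 2) (a : A), a ∈ 𝒜 i → T a ∈ 𝒜 (i + 1))
    (hU : ∀ (i : ZMod 2) (a : A), a ∈ 𝒜 i → U a ∈ 𝒜 (i + 1)) :
    ∀ (i j k : ZMod 2) (a b c : A), a ∈ 𝒜 i → b ∈ 𝒜 j → c ∈ 𝒜 k →
      Phi3 mul 0 (T ∘ₗ U + U ∘ₗ T) i j a b c
        = (T (Phi3 mul 1 U i j a b c) + Phi3 mul 1 U (i + 1) j (T a) b c
            + ((-1 : ℤ) ^ i.val) • Phi3 mul 1 U i (j + 1) a (T b) c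
            + ((-1 : ℤ) ^ (i.val + j.val)) • Phi3 mul 1 U i j a b (T c))
          + (U (Phi3 mul 1 T i j a b c) + Phi3 mul 1 T (i + 1) j (U a) b c
            + ((-1 : ℤ) ^ i.val) • Phi3 mul 1 T i (j + 1) a (U b) c
            + ((-1 : ℤ) ^ (i.val + j.val)) • Phi3 mul 1 T i j a b (U c))
          + (Phi2 mul 1 T (1 + i + j) (Phi2 mul 1 U i a b) c
            + ((-1 : ℤ) ^ ((1 + i.val) * j.val)) • Phi2 mul 1 T j b (Phi2 mul 1 U i a c)
            + ((-1 : ℤ) ^ i.val) • Phi2 mul 1 U i a (Phi2 mul 1 T j b c))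
          + (Phi2 mul 1 U (1 + i + j) (Phi2 mul 1 T i a b) c
            + ((-1 : ℤ) ^ ((1 + i.val) * j.val)) • Phi2 mul 1 U j b (Phi2 mul 1 T i a c)
            + ((-1 : ℤ) ^ i.val) • Phi2 mul 1 T i a (Phi2 mul 1 U j b c)) := by
  intro i j _ a b c _ _ _
  have v0 : (0 : ZMod 2).val = 0 := rfl
  have v1 : (1 : ZMod 2).val = 1 := rfl
  have h11 : (1 : ZMod 2) + 1 = 0 := rfl
  have hp : ∀ x : ZMod 2, x = 0 ∨ x = 1 := by decide
  -- All signs depend only on the parities of `a` and `b`; in each of the four cases they are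
  -- explicit, and full expansion leaves an identity in the additive group `A`.
  rcases hp i with rfl | rfl <;> rcases hp j with rfl | rfl <;>
    simp only [Phi3, Phi2, v0, v1, h11, zero_add, add_zero, mul_zero, zero_mul, mul_one, one_mul,
      pow_zero, pow_one, one_smul, neg_smul, Nat.reduceAdd, Nat.reduceMul, even_two,
      Even.neg_pow, one_pow, map_sub, map_add, map_neg,
      LinearMap.sub_apply, LinearMap.add_apply, LinearMap.neg_apply, LinearMap.comp_apply] <;>
    abel
end
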